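/- Let g : ℝ^n → ℝ^p be a map and M ⊆ ℝ^p a nonempty set such that g is M-nearly convex. Then ri(epi_M(g)) = {(x, y) ∈ ℝ^n × ℝ^p | y − g(x) ∈ ri M}. -/

import Mathlib

/-!
Relative interior points of a nearly convex set `s` are detected by segments: from a point of
`ri s`, every open segment to a point of `closure s` stays in `ri s`, and conversely every segment
from a point of `s` to a point `x ∈ ri s` can be prolonged beyond `x` inside `s`. Hence affine maps
commute with `ri` on nearly convex sets, and a nearly convex `s ⊆ X × Y` satisfies
`(x, y) ∈ ri s` iff `x` lies in the relative interior of the projection of `s` to `X` and `y` in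
that of the slice of `s` over `x`. For `epi_M(g)` the projection is all of `X`, and the slice over
`x` is the translate `g x + M`.
-/

open Set Metric

noncomputable section

/-- A set is *nearly convex* if it lies between a convex set and its closure. -/
def NearlyConvex {E : Type*} [NormedAddCommGroup E] [NormedSpace ℝ E] (s : Set E) : Prop :=
  ∃ C : Set E, Convex ℝ C ∧ C ⊆ s ∧ s ⊆ closure C

/-- The *relative interior* of a set: points `a ∈ s` admitting `δ > 0` with
`B(a,δ) ∩ aff s ⊆ s`. -/
def ri {E : Type*} [NormedAddCommGroup E] [NormedSpace ℝ E] (s : Set E) : Set E :=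
  {a | a ∈ s ∧ ∃ δ > 0, Metric.ball a δ ∩ (affineSpan ℝ s : Set E) ⊆ s}

open AffineMap Topology

section RelativeInterior

variable {E F : Type*} [NormedAddCommGroup E] [NormedSpace ℝ E]
  [NormedAddCommGroup F] [NormedSpace ℝ F] {s C : Set E} {a b x : E}

theorem mem_ri_iff_mem_nhdsWithin :
    a ∈ ri s ↔ a ∈ affineSpan ℝ s ∧ s ∈ 𝓝[affineSpan ℝ s] a := by
  constructor
  · rintro ⟨ha, hball⟩
    exact ⟨subset_affineSpan ℝ s ha, mem_nhdsWithin_iff.2 hball⟩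
  · rintro ⟨ha, hs⟩
    exact ⟨mem_of_mem_nhdsWithin ha hs, mem_nhdsWithin_iff.1 hs⟩

theorem ri_eq_intrinsicInterior (s : Set E) : ri s = intrinsicInterior ℝ s := by
  ext a
  simp only [mem_ri_iff_mem_nhdsWithin, mem_intrinsicInterior, mem_interior_iff_mem_nhds]
  constructor
  · rintro ⟨ha, hs⟩
    exact ⟨⟨a, ha⟩, preimage_coe_mem_nhds_subtype.2 hs, rfl⟩
  · rintro ⟨a, hs, rfl⟩
    exact ⟨a.2, preimage_coe_mem_nhds_subtype.1 hs⟩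

theorem ri_subset : ri s ⊆ s := fun _ ha => ha.1

theorem ri_univ : ri (univ : Set E) = univ :=
  eq_univ_of_forall fun a => mem_ri_iff_mem_nhdsWithin.2 ⟨by simp, Filter.univ_mem⟩

theorem preimage_ri_subset (φ : F →ᵃ[ℝ] E) (hφ : Continuous φ) (s : Set E) :
    φ ⁻¹' ri s ⊆ ri (φ ⁻¹' s) := by
  intro a ha
  have haφ : φ a ∈ s := ri_subset ha
  obtain ⟨-, hs⟩ := mem_ri_iff_mem_nhdsWithin.1 ha
  have hspan : affineSpan ℝ (φ ⁻¹' s) ≤ (affineSpan ℝ s).comap φ :=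
    affineSpan_le.2 fun _ hw => subset_affineSpan ℝ s hw
  exact mem_ri_iff_mem_nhdsWithin.2 ⟨subset_affineSpan ℝ _ haφ,
    hφ.continuousWithinAt.tendsto_nhdsWithin (fun _ hw => hspan hw) hs⟩

theorem ri_preimage_sub_right (s : Set E) (v : E) :
    ri ((· - v) ⁻¹' s) = (· - v) ⁻¹' ri s := by
  simp only [sub_eq_neg_add, ← image_add_left, ri_eq_intrinsicInterior]
  exact (ContinuousAffineEquiv.constVAdd ℝ E v).intrinsicInterior_image s

theorem exists_mem_openSegment_of_mem_ri (hx : x ∈ ri s) (ha : a ∈ affineSpan ℝ s) :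
    ∃ b ∈ s, x ∈ openSegment ℝ a b := by
  obtain ⟨hx_span, hs⟩ := mem_ri_iff_mem_nhdsWithin.1 hx
  have hcont : Continuous fun r : ℝ => lineMap a x r := lineMap_continuous
  have hlim : Filter.Tendsto (fun r : ℝ => lineMap a x r) (𝓝 1) (𝓝[affineSpan ℝ s] x) :=
    tendsto_nhdsWithin_iff.2 ⟨hcont.tendsto' 1 x (lineMap_apply_one a x),
      .of_forall fun r => lineMap_mem r ha hx_span⟩
  obtain ⟨r, hr, hr_one⟩ :=
    ((hlim.eventually_mem hs).filter_mono nhdsWithin_le_nhds |>.and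
      (self_mem_nhdsWithin (s := Ioi 1))).exists
  have hr_pos : 0 < r := zero_lt_one.trans hr_one
  have hseg := lineMap_mem_openSegment ℝ a (lineMap a x r)
    (⟨inv_pos.2 hr_pos, inv_lt_one_of_one_lt₀ hr_one⟩ : r⁻¹ ∈ Ioo 0 1)
  rw [lineMap_lineMap_right, inv_mul_cancel₀ hr_pos.ne', lineMap_apply_one] at hseg
  exact ⟨_, hr, hseg⟩

section FiniteDimensional

variable [FiniteDimensional ℝ E]

theorem closure_subset_affineSpan (s : Set E) : closure s ⊆ affineSpan ℝ s :=
  closure_minimal (subset_affineSpan ℝ s) (affineSpan ℝ s).closed_of_finiteDimensional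

theorem affineSpan_eq_of_subset_closure (hCs : C ⊆ s) (hsC : s ⊆ closure C) :
    affineSpan ℝ s = affineSpan ℝ C :=
  le_antisymm (affineSpan_le.2 (hsC.trans (closure_subset_affineSpan C)))
    (affineSpan_mono ℝ hCs)

theorem openSegment_subset_ri_of_convex (hC : Convex ℝ C) (ha : a ∈ ri C) (hb : b ∈ closure C) :
    openSegment ℝ a b ⊆ ri C := by
  rw [openSegment_symm, openSegment_eq_image_lineMap]
  rintro _ ⟨t, ht, rfl⟩
  obtain ⟨ha_span, hCa⟩ := mem_ri_iff_mem_nhdsWithin.1 ha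
  rw [mem_nhdsWithin_iff_eventually] at hCa
  -- Dilating by `t⁻¹` about `b` sends `lineMap b a t` back to `a`; dilating about a nearby
  -- `b' ∈ C` instead still sends all points close to `lineMap b a t` to points close to `a`.
  have hdilate : Filter.Tendsto (fun z : E × E => lineMap z.1 z.2 t⁻¹)
      (𝓝 (b, lineMap b a t)) (𝓝 a) := by
    have hcont : Continuous fun z : E × E => lineMap z.1 z.2 t⁻¹ := by
      fun_prop
    refine hcont.tendsto' _ _ ?_
    rw [lineMap_lineMap_right, inv_mul_cancel₀ ht.1.ne', lineMap_apply_one]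
  obtain ⟨b', hb'C, hb'⟩ := ((mem_closure_iff_frequently.1 hb).and_eventually
    (hdilate.eventually hCa).curry_nhds).exists
  refine mem_ri_iff_mem_nhdsWithin.2
    ⟨lineMap_mem t (closure_subset_affineSpan C hb) ha_span, mem_nhdsWithin_iff_eventually.2 ?_⟩
  filter_upwards [hb'] with w hw hw_span
  have hw_dilate : lineMap b' w t⁻¹ ∈ C := hw (lineMap_mem _ (subset_affineSpan ℝ C hb'C) hw_span)
  have hw_mem := hC.lineMap_mem hb'C hw_dilate (Ioo_subset_Icc_self ht)
  rwa [lineMap_lineMap_right, mul_inv_cancel₀ ht.1.ne', lineMap_apply_one] at hw_mem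

theorem ri_eq_ri_of_subset_closure (hC : Convex ℝ C) (hCs : C ⊆ s) (hsC : s ⊆ closure C) :
    ri s = ri C := by
  have hspan := affineSpan_eq_of_subset_closure hCs hsC
  refine Subset.antisymm (fun a ha => ?_) (fun a ha => ?_)
  · have hC_ne : C.Nonempty := closure_nonempty_iff.1 ⟨a, hsC (ri_subset ha)⟩
    obtain ⟨c, hc⟩ : (ri C).Nonempty := ri_eq_intrinsicInterior C ▸ hC_ne.intrinsicInterior hC
    obtain ⟨b, hb, hab⟩ :=
      exists_mem_openSegment_of_mem_ri ha (subset_affineSpan ℝ s (hCs (ri_subset hc)))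
    exact openSegment_subset_ri_of_convex hC hc (hsC hb) hab
  · rw [mem_ri_iff_mem_nhdsWithin, ← hspan] at ha
    exact mem_ri_iff_mem_nhdsWithin.2 ⟨ha.1, Filter.mem_of_superset ha.2 hCs⟩

end FiniteDimensional

namespace NearlyConvex

theorem image (hs : NearlyConvex s) (f : E →ᵃ[ℝ] F) (hf : Continuous f) :
    NearlyConvex (f '' s) := by
  obtain ⟨C, hC, hCs, hsC⟩ := hs
  exact ⟨f '' C, hC.affine_image f, image_mono hCs,
    (image_mono hsC).trans (image_closure_subset_closure_image hf)⟩

variable [FiniteDimensional ℝ E]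

theorem ri_nonempty (hs : NearlyConvex s) (hne : s.Nonempty) : (ri s).Nonempty := by
  obtain ⟨C, hC, hCs, hsC⟩ := hs
  rw [ri_eq_ri_of_subset_closure hC hCs hsC, ri_eq_intrinsicInterior]
  exact (closure_nonempty_iff.1 (hne.mono hsC)).intrinsicInterior hC

theorem openSegment_subset_ri (hs : NearlyConvex s) (ha : a ∈ ri s) (hb : b ∈ closure s) :
    openSegment ℝ a b ⊆ ri s := by
  obtain ⟨C, hC, hCs, hsC⟩ := hs
  rw [ri_eq_ri_of_subset_closure hC hCs hsC] at ha ⊢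
  exact openSegment_subset_ri_of_convex hC ha (closure_minimal hsC isClosed_closure hb)

theorem ri_image [FiniteDimensional ℝ F] (hs : NearlyConvex s) (f : E →ᵃ[ℝ] F) :
    ri (f '' s) = f '' ri s := by
  apply Subset.antisymm
  · intro y hy
    obtain ⟨a, ha⟩ := hs.ri_nonempty (image_nonempty.1 ⟨y, ri_subset hy⟩)
    obtain ⟨_, ⟨b, hb, rfl⟩, hyb⟩ := exists_mem_openSegment_of_mem_ri hy
      (subset_affineSpan ℝ _ (mem_image_of_mem f (ri_subset ha)))
    rw [← image_openSegment] at hyb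
    exact image_mono (hs.openSegment_subset_ri ha (subset_closure hb)) hyb
  · rintro _ ⟨x, hx, rfl⟩
    have hfs : NearlyConvex (f '' s) := hs.image f f.continuous_of_finiteDimensional
    obtain ⟨_, hc_ri⟩ := hfs.ri_nonempty ⟨f x, mem_image_of_mem f (ri_subset hx)⟩
    obtain ⟨c, hc, rfl⟩ := ri_subset hc_ri
    obtain ⟨b, hb, hxb⟩ := exists_mem_openSegment_of_mem_ri hx (subset_affineSpan ℝ s hc)
    refine hfs.openSegment_subset_ri hc_ri (subset_closure (mem_image_of_mem f hb)) ?_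
    exact image_openSegment ℝ f c b ▸ mem_image_of_mem f hxb

end NearlyConvex

end RelativeInterior

section Product

variable {X Y : Type*} [NormedAddCommGroup X] [NormedSpace ℝ X] [FiniteDimensional ℝ X]
  [NormedAddCommGroup Y] [NormedSpace ℝ Y] [FiniteDimensional ℝ Y]

theorem NearlyConvex.mk_mem_ri_iff {s : Set (X × Y)} (hs : NearlyConvex s) {x : X} {y : Y} :
    (x, y) ∈ ri s ↔ x ∈ ri (Prod.fst '' s) ∧ y ∈ ri (Prod.mk x ⁻¹' s) := by
  have hfst : ri (Prod.fst '' s) = Prod.fst '' ri s :=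
    hs.ri_image (LinearMap.fst ℝ X Y).toAffineMap
  rw [hfst]
  constructor
  · intro h
    let slice : Y →ᵃ[ℝ] X × Y := (AffineMap.const ℝ Y x).prod (AffineMap.id ℝ Y)
    exact ⟨mem_image_of_mem Prod.fst h,
      preimage_ri_subset slice (Continuous.prodMk_right x) s h⟩
  · rintro ⟨⟨⟨x, y₀⟩, h₀, rfl⟩, hy⟩
    have hy₀ : (x, y₀) ∈ s := ri_subset h₀
    obtain ⟨b, hb, hyb⟩ := exists_mem_openSegment_of_mem_ri hy (subset_affineSpan ℝ _ hy₀)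
    refine hs.openSegment_subset_ri h₀ (subset_closure hb) ?_
    exact Prod.image_mk_openSegment_right (𝕜 := ℝ) x y₀ b ▸ mem_image_of_mem (Prod.mk x) hyb

end Product

section Epigraph

/-- The epigraph `epi_M(g)` of `g` with respect to `M`: the order relation `g x ≤ y` of the usual
epigraph is replaced by `y - g x ∈ M`. -/
def epi {X Y : Type*} [Sub Y] (M : Set Y) (g : X → Y) : Set (X × Y) :=
  {q | q.2 - g q.1 ∈ M}

theorem image_fst_epi {X Y : Type*} [AddGroup Y] {M : Set Y} (hM : M.Nonempty) (g : X → Y) :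
    Prod.fst '' epi M g = univ := by
  obtain ⟨m, hm⟩ := hM
  exact eq_univ_of_forall fun x => ⟨(x, m + g x), by simpa [epi] using hm, rfl⟩

theorem ri_epiM_general {X Y : Type*}
    [NormedAddCommGroup X] [NormedSpace ℝ X] [FiniteDimensional ℝ X]
    [NormedAddCommGroup Y] [NormedSpace ℝ Y] [FiniteDimensional ℝ Y]
    {g : X → Y} {M : Set Y} (hM : M.Nonempty) (hg : NearlyConvex (epi M g)) :
    ri (epi M g) = epi (ri M) g := by
  ext ⟨x, y⟩
  have hslice (N : Set Y) : Prod.mk x ⁻¹' epi N g = (· - g x) ⁻¹' N := rfl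
  calc (x, y) ∈ ri (epi M g)
      ↔ x ∈ ri (Prod.fst '' epi M g) ∧ y ∈ ri (Prod.mk x ⁻¹' epi M g) := hg.mk_mem_ri_iff
    _ ↔ y ∈ ri ((· - g x) ⁻¹' M) := by
      simp only [image_fst_epi hM, ri_univ, mem_univ, true_and, hslice]
    _ ↔ (x, y) ∈ epi (ri M) g := by rw [ri_preimage_sub_right, ← hslice, mem_preimage]

end Epigraph

theorem ri_epiM (n p : ℕ) (g : EuclideanSpace ℝ (Fin n) → EuclideanSpace ℝ (Fin p))
    (M : Set (EuclideanSpace ℝ (Fin p))) (hM : M.Nonempty)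
    (hg : NearlyConvex {q : EuclideanSpace ℝ (Fin n) × EuclideanSpace ℝ (Fin p) |
      q.2 - g q.1 ∈ M}) :
    ri {q : EuclideanSpace ℝ (Fin n) × EuclideanSpace ℝ (Fin p) | q.2 - g q.1 ∈ M} =
      {q : EuclideanSpace ℝ (Fin n) × EuclideanSpace ℝ (Fin p) | q.2 - g q.1 ∈ ri M} :=
  ri_epiM_general hM hg
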